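/- Weak pseudo-randomness: in the high temperature phase with unique fixed point p* of φ(p)=p, for every ε > 0 and every even integer l ≥ 4, the probability under the Gibbs measure p_n that a random graph X satisfies both |N_edges(X) − p*·n²/2| ≤ ε·n² and N_{C_l}(X) ≤ (n·p*)^l + ε·n^l tends to 1 as n → ∞, where N_edges(X) is the number of edges of X and N_{C_l}(X) is the number of labelled copies of the l-cycle in X. -/

import Mathlib

open Finset

open scoped Classical

noncomputable section

/-- The set of edges of the complete graph `K_n` on vertex set `[n] = Fin n`:
unordered pairs of distinct vertices. -/
abbrev EdgeK (n : ℕ) : Type := {e : Sym2 (Fin n) // ¬ e.IsDiag}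

/-- A graph on `[n]`, identified with an element `X ∈ {0,1}^{E(K_n)}`. -/
abbrev Config (n : ℕ) : Type := EdgeK n → Bool

/-- The image of an edge under an injection of vertex sets. -/
def mapEdge {m n : ℕ} (v : Fin m ↪ Fin n) (a : EdgeK m) : EdgeK n :=
  ⟨a.1.map v, fun h => a.2 ((Sym2.isDiag_map v.injective).mp h)⟩

/-- The complete graph `K_n` as a configuration. -/
def fullConfig (n : ℕ) : Config n := fun _ => true

/-- `X ∪ {e}`. -/
def addEdge {n : ℕ} (X : Config n) (e : EdgeK n) : Config n :=
  fun f => if f = e then true else X f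

/-- `X_{e+}` (for `b = true`), resp. `X_{e-}` (for `b = false`). -/
def setEdge {n : ℕ} (X : Config n) (e : EdgeK n) (b : Bool) : Config n :=
  fun f => if f = e then b else X f

/-- `N_G(X)`: the number of tuples of `m` distinct vertices of `[n]` such that every
edge of the pattern graph `G` (a graph on `m` labelled vertices) is mapped to an edge of `X`. -/
def copyCount {n m : ℕ} (X : Config n) (G : Finset (EdgeK m)) : ℕ :=
  (univ.filter fun v : Fin m ↪ Fin n => ∀ a ∈ G, X (mapEdge v a) = true).card

/-- `N_G(X, e)`: the number of such tuples for `X ∪ {e}` which moreover use the edge `e`. -/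
def rootedCount {n m : ℕ} (X : Config n) (G : Finset (EdgeK m)) (e : EdgeK n) : ℕ :=
  (univ.filter fun v : Fin m ↪ Fin n =>
    (∃ a ∈ G, mapEdge v a = e) ∧ ∀ a ∈ G, addEdge X e (mapEdge v a) = true).card

/-- `N_G(X, e, e')`: the number of such tuples for `X ∪ {e, e'}` which use both `e` and `e'`. -/
def rooted2Count {n m : ℕ} (X : Config n) (G : Finset (EdgeK m)) (e e' : EdgeK n) : ℕ :=
  (univ.filter fun v : Fin m ↪ Fin n =>
    (∃ a ∈ G, mapEdge v a = e) ∧ (∃ a ∈ G, mapEdge v a = e') ∧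
      ∀ a ∈ G, addEdge (addEdge X e) e' (mapEdge v a) = true).card

/-- The number of edges of the graph `X`. -/
def edgeCount {n : ℕ} (X : Config n) : ℕ := (univ.filter fun e => X e = true).card

/-- Hamming distance between two graphs: the number of edges of disagreement. -/
def hamDist {n : ℕ} (X Y : Config n) : ℕ := (univ.filter fun f => X f ≠ Y f).card

/-- The Hamiltonian `H(X) = ∑ i, β i * N_{G_i}(X) / n^(|V_i| - 2)`. -/
def ergmH {s : ℕ} (V : Fin s → ℕ) (Pt : ∀ i, Finset (EdgeK (V i))) (β : Fin s → ℝ)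
    (n : ℕ) (X : Config n) : ℝ :=
  ∑ i, β i * (copyCount X (Pt i) : ℝ) / (n : ℝ) ^ (V i - 2)

/-- The Gibbs measure `p_n(X) = exp(H(X)) / Z_n`. -/
def gibbs {s : ℕ} (V : Fin s → ℕ) (Pt : ∀ i, Finset (EdgeK (V i))) (β : Fin s → ℝ)
    (n : ℕ) (X : Config n) : ℝ :=
  Real.exp (ergmH V Pt β n X) / ∑ Y : Config n, Real.exp (ergmH V Pt β n Y)

/-- `∂_e H(X) = H(X_{e+}) - H(X_{e-})`. -/
def dH {s : ℕ} (V : Fin s → ℕ) (Pt : ∀ i, Finset (EdgeK (V i))) (β : Fin s → ℝ)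
    (n : ℕ) (X : Config n) (e : EdgeK n) : ℝ :=
  ergmH V Pt β n (setEdge X e true) - ergmH V Pt β n (setEdge X e false)

/-- The transition kernel of the Glauber dynamics: a uniformly random edge `e` of `K_n` is
chosen and set present with probability `exp(∂_e H(X)) /(1 + exp(∂_e H(X)))`, absent
otherwise. -/
def glauber {s : ℕ} (V : Fin s → ℕ) (Pt : ∀ i, Finset (EdgeK (V i))) (β : Fin s → ℝ)
    (n : ℕ) (X Y : Config n) : ℝ :=
  ((n.choose 2 : ℝ))⁻¹ * ∑ e : EdgeK n,
    ((if Y = setEdge X e true then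
        Real.exp (dH V Pt β n X e) / (1 + Real.exp (dH V Pt β n X e)) else 0)
      + (if Y = setEdge X e false then 1 / (1 + Real.exp (dH V Pt β n X e)) else 0))

/-- The `t`-step distribution of the Markov chain with one-step kernel `K`,
started from a given state. -/
def kernelStep {n : ℕ} (K : Config n → Config n → ℝ) : ℕ → Config n → Config n → ℝ
  | 0 => fun x y => if y = x then 1 else 0
  | (t+1) => fun x y => ∑ z, kernelStep K t x z * K z y

/-- Total variation distance between two (signed) distributions on `Config n`. -/
def tvDist {n : ℕ} (μ ν : Config n → ℝ) : ℝ := (∑ Y, |μ Y - ν Y|) / 2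

/-- `mixes K π t` says that after `t` steps the chain with kernel `K` is within total
variation distance `e⁻¹` of `π` from every starting state. -/
def mixes {n : ℕ} (K : Config n → Config n → ℝ) (π : Config n → ℝ) (t : ℕ) : Prop :=
  ∀ x, tvDist (kernelStep K t x) π ≤ Real.exp (-1)

/-- The mixing time: the least `t` such that from every starting state the chain is within
total variation distance `e⁻¹` of `π`. -/
def mixingTime {n : ℕ} (K : Config n → Config n → ℝ) (π : Config n → ℝ) : ℕ :=
  sInf {t | mixes K π t}

/-- `Ψ(p) = ∑ i, 2 β_i |E_i| p^(|E_i| - 1)`. -/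
def PsiF {s : ℕ} {V : Fin s → ℕ} (Pt : ∀ i, Finset (EdgeK (V i))) (β : Fin s → ℝ)
    (p : ℝ) : ℝ :=
  ∑ i, 2 * β i * ((Pt i).card : ℝ) * p ^ ((Pt i).card - 1)

/-- `φ(p) = exp(Ψ(p)) / (1 + exp(Ψ(p)))`. -/
def phiF {s : ℕ} {V : Fin s → ℕ} (Pt : ∀ i, Finset (EdgeK (V i))) (β : Fin s → ℝ)
    (p : ℝ) : ℝ :=
  Real.exp (PsiF Pt β p) / (1 + Real.exp (PsiF Pt β p))

/-- High temperature phase: `φ(p) = p` has a unique solution `p*` (in `[0,1]`), which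
moreover satisfies `φ'(p*) < 1`. -/
def HighTemp {s : ℕ} {V : Fin s → ℕ} (Pt : ∀ i, Finset (EdgeK (V i))) (β : Fin s → ℝ)
    (pstar : ℝ) : Prop :=
  pstar ∈ Set.Icc (0:ℝ) 1 ∧ phiF Pt β pstar = pstar ∧
    (∀ q ∈ Set.Icc (0:ℝ) 1, phiF Pt β q = q → q = pstar) ∧
    deriv (phiF Pt β) pstar < 1

/-- Low temperature phase: `φ(p) = p` has at least two solutions `p` with `φ'(p) < 1`. -/
def LowTemp {s : ℕ} {V : Fin s → ℕ} (Pt : ∀ i, Finset (EdgeK (V i))) (β : Fin s → ℝ) : Prop :=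
  ∃ p₁ p₂ : ℝ, p₁ ∈ Set.Icc (0:ℝ) 1 ∧ p₂ ∈ Set.Icc (0:ℝ) 1 ∧ p₁ ≠ p₂ ∧
    phiF Pt β p₁ = p₁ ∧ phiF Pt β p₂ = p₂ ∧
    deriv (phiF Pt β) p₁ < 1 ∧ deriv (phiF Pt β) p₂ < 1

/-- `r_G(X, e) = (N_G(X,e) / (2 |E(G)| n^(|V(G)|-2)))^(1/(|E(G)|-1))`. -/
def rG {n m : ℕ} (X : Config n) (G : Finset (EdgeK m)) (e : EdgeK n) : ℝ :=
  ((rootedCount X G e : ℝ) / (2 * (G.card : ℝ) * (n : ℝ) ^ (m - 2))) ^ (((G.card : ℝ) - 1)⁻¹)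

/-- The set of values `r_G(X,e)` over all edges `e` of `K_n` and all graphs `G` on at
most `L` vertices with at least two edges. -/
def rSet (L n : ℕ) (X : Config n) : Set ℝ :=
  {r | ∃ m, m ≤ L ∧ ∃ G : Finset (EdgeK m), 2 ≤ G.card ∧ ∃ e : EdgeK n, r = rG X G e}

/-- `r̄(X)`: the maximum of `r_G(X,e)` over all edges `e` of `K_n` and all graphs `G` on
at most `L` vertices with at least two edges. -/
def rbar (L n : ℕ) (X : Config n) : ℝ := sSup (rSet L n X)

/-- `r_min(X)`: the corresponding minimum. -/
def rmin (L n : ℕ) (X : Config n) : ℝ := sInf (rSet L n X)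

/-- The cycle `C_l` on `l` labelled vertices, as a pattern graph. -/
def cyclePattern (l : ℕ) [NeZero l] : Finset (EdgeK l) :=
  univ.filter fun e => ∃ i : Fin l, e.1 = s(i, i + 1)

/-- The probability of a length-`T` trajectory `w` for the chain with kernel `K`
started at `x`. -/
def trajProb {n T : ℕ} (K : Config n → Config n → ℝ) (x : Config n)
    (w : Fin (T+1) → Config n) : ℝ :=
  (if w 0 = x then 1 else 0) * ∏ i : Fin T, K (w i.castSucc) (w i.succ)

/-- Two edges of `K_n` share a vertex. -/
def sharesVertex {n : ℕ} (e e' : EdgeK n) : Prop := ∃ v, v ∈ e.1 ∧ v ∈ e'.1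

end

/-!
Under the Gibbs measure the edge `e`, given the rest of the graph, is present with probability
`σ (∂_e H)`, `σ` the logistic function. Suppose these conditional probabilities exceed a constant
`q` only by an amount whose mean is `o(1)`, uniformly in `e`. Let `D` be the density in `X` of a
family of `k`-edge graphs, each of which meets only a vanishing proportion of the others. In
`E[(D - q^k)⁺ (D - q^k)]`, expand the second factor over the family: each member barely affects
`D`, so its edges can be resampled one at a time at the cost of a factor `q` each, and the
expectation is `o(1)`. Hence `D` exceeds `q^k` only by `o(1)` in mean.

Apart from constant contributions of the patterns with at most one edge, `∂_e H` is a nonnegative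
combination of such densities, with limit value `Ψ(q)` at density `q`. So the conditional
probabilities in fact exceed `φ(q)` only by `o(1)` in mean. The bound `q = 1` is trivial, and
iterating `φ` from there decreases to the unique fixed point `p*`; symmetrically, lower bounds
iterate up from `q = 0`. The density of the copies of a pattern `G` is therefore `p*^|E(G)|` up to
`o(1)` in mean, and Markov's inequality concludes.
-/

open Filter Topology

open scoped BigOperators

noncomputable section

section WeightedMean

variable {Ω : Type*} [Fintype Ω] {μ : Ω → ℝ} {f g : Ω → ℝ}

lemma dotProduct_le_add_mul (hμ : μ ∈ stdSimplex ℝ Ω) {a b : ℝ} (h : ∀ x, g x ≤ a + b * f x) :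
    μ ⬝ᵥ g ≤ a + b * (μ ⬝ᵥ f) := by
  calc μ ⬝ᵥ g ≤ μ ⬝ᵥ (a • 1 + b • f) :=
        dotProduct_le_dotProduct_of_nonneg_left (fun x => by simpa using h x) hμ.1
    _ = a + b * (μ ⬝ᵥ f) := by
        rw [dotProduct_add, dotProduct_smul, dotProduct_smul, dotProduct_one, hμ.2, smul_eq_mul,
          smul_eq_mul, mul_one]

lemma abs_dotProduct_sub_dotProduct_le (hμ : μ ∈ stdSimplex ℝ Ω) {η : ℝ}
    (h : ∀ x, |f x - g x| ≤ η) : |μ ⬝ᵥ f - μ ⬝ᵥ g| ≤ η := by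
  have hfg := dotProduct_le_add_mul hμ (g := f) (f := g) (a := η) (b := 1)
    fun x => by linarith [le_of_abs_le (h x)]
  have hgf := dotProduct_le_add_mul hμ (g := g) (f := f) (a := η) (b := 1)
    fun x => by linarith [neg_le_of_abs_le (h x)]
  exact abs_sub_le_iff.mpr ⟨by linarith, by linarith⟩

lemma sq_dotProduct_le (hμ : μ ∈ stdSimplex ℝ Ω) :
    (μ ⬝ᵥ f) ^ 2 ≤ μ ⬝ᵥ fun x => f x ^ 2 :=
  Real.pow_arith_mean_le_arith_mean_pow_of_even univ μ f (fun x _ => hμ.1 x) hμ.2 even_two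

lemma mul_sum_filter_lt_le (hμ : μ ∈ stdSimplex ℝ Ω) (hf : ∀ x, 0 ≤ f x) (ε : ℝ) :
    ε * ∑ x with ε < f x, μ x ≤ μ ⬝ᵥ f := by
  rw [mul_sum]
  calc ∑ x with ε < f x, ε * μ x ≤ ∑ x with ε < f x, μ x * f x := by
        refine sum_le_sum fun x hx => ?_
        rw [mul_comm]
        exact mul_le_mul_of_nonneg_left (mem_filter.mp hx).2.le (hμ.1 x)
    _ ≤ μ ⬝ᵥ f := sum_le_sum_of_subset_of_nonneg (filter_subset _ _)
        fun x _ _ => mul_nonneg (hμ.1 x) (hf x)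

/-- The mean over the weights `μ` of the amount by which `τ * f` exceeds `τ * q`. With `τ = 1` it
measures how far `f` lies above `q`, with `τ = -1` how far `f` lies below `q`. -/
def meanExcess (μ : Ω → ℝ) (τ q : ℝ) (f : Ω → ℝ) : ℝ :=
  μ ⬝ᵥ fun x => (τ * (f x - q))⁺

lemma meanExcess_nonneg (hμ : μ ∈ stdSimplex ℝ Ω) (τ q : ℝ)
    (f : Ω → ℝ) : 0 ≤ meanExcess μ τ q f :=
  dotProduct_nonneg_of_nonneg hμ.1 fun _ => posPart_nonneg _

lemma meanExcess_le_add_meanExcess (hμ : μ ∈ stdSimplex ℝ Ω) {τ q q' η : ℝ}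
    (h : ∀ x, |τ * (f x - q) - τ * (g x - q')| ≤ η) :
    meanExcess μ τ q f ≤ η + meanExcess μ τ q' g := by
  refine (dotProduct_le_add_mul hμ fun x => ?_).trans_eq (by rw [one_mul]; rfl)
  rw [one_mul, ← sub_le_iff_le_add]
  exact (le_abs_self _).trans ((abs_max_sub_max_le_abs _ _ _).trans (h x))

lemma meanExcess_const_mul (μ : Ω → ℝ) (τ q : ℝ) (f : Ω → ℝ) {c : ℝ} (hc : 0 ≤ c) :
    meanExcess μ τ (c * q) (fun x => c * f x) = c * meanExcess μ τ q f := by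
  have hpoint : (fun x => (τ * (c * f x - c * q))⁺) = c • fun x => (τ * (f x - q))⁺ := by
    ext x
    rw [Pi.smul_apply, smul_eq_mul, ← mul_sub, mul_left_comm, posPart_def, posPart_def,
      mul_max_of_nonneg _ _ hc, mul_zero]
  rw [meanExcess, hpoint, dotProduct_smul, smul_eq_mul, meanExcess]

lemma meanExcess_sum_le (hμ : μ ∈ stdSimplex ℝ Ω) {ι : Type*} (τ : ℝ) (s : Finset ι) (q : ι → ℝ)
    (f : ι → Ω → ℝ) :
    meanExcess μ τ (∑ i ∈ s, q i) (fun x => ∑ i ∈ s, f i x) ≤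
      ∑ i ∈ s, meanExcess μ τ (q i) (f i) := by
  simp only [meanExcess, ← dotProduct_sum]
  refine dotProduct_le_dotProduct_of_nonneg_left (fun x => ?_) hμ.1
  rw [Finset.sum_apply, ← sum_sub_distrib, mul_sum]
  exact sup_le (sum_le_sum fun i _ => le_posPart _) (sum_nonneg fun i _ => posPart_nonneg _)

lemma meanExcess_one_add_meanExcess_neg_one (μ : Ω → ℝ) (q : ℝ) (f : Ω → ℝ) :
    meanExcess μ 1 q f + meanExcess μ (-1) q f = μ ⬝ᵥ fun x => |f x - q| := by
  rw [meanExcess, meanExcess, ← dotProduct_add]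
  congr 1 with x
  rw [Pi.add_apply, one_mul, neg_one_mul, posPart_neg, posPart_add_negPart]

lemma mul_dotProduct_mul_le_add_meanExcess (hμ : μ ∈ stdSimplex ℝ Ω) (τ q : ℝ) (f : Ω → ℝ)
    {k : Ω → ℝ} (hk₀ : ∀ x, 0 ≤ k x) (hk₁ : ∀ x, k x ≤ 1) :
    τ * (μ ⬝ᵥ (k * f)) ≤ q * (τ * (μ ⬝ᵥ k)) + meanExcess μ τ q f := by
  have hpointwise : μ ⬝ᵥ (k * τ • (f - q • 1)) ≤ meanExcess μ τ q f := by
    refine dotProduct_le_dotProduct_of_nonneg_left (fun x => ?_) hμ.1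
    simp only [Pi.mul_apply, Pi.smul_apply, Pi.sub_apply, Pi.one_apply, smul_eq_mul, mul_one]
    calc k x * (τ * (f x - q)) ≤ k x * (τ * (f x - q))⁺ :=
          mul_le_mul_of_nonneg_left (le_posPart _) (hk₀ x)
      _ ≤ (τ * (f x - q))⁺ := mul_le_of_le_one_left (posPart_nonneg _) (hk₁ x)
  rw [mul_smul_comm, mul_sub, mul_smul_comm, mul_one, dotProduct_smul, dotProduct_sub,
    dotProduct_smul, smul_eq_mul, smul_eq_mul] at hpointwise
  linarith

end WeightedMean

section Resampling

variable {E : Type*}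

/-- The indicator of the event that all edges of `B` are present in the configuration `X`. -/
def presence (B : Finset E) (X : E → Bool) : ℝ := if ∀ e ∈ B, X e = true then 1 else 0

lemma presence_nonneg (B : Finset E) (X : E → Bool) : 0 ≤ presence B X := by
  unfold presence; split_ifs <;> norm_num

lemma presence_le_one (B : Finset E) (X : E → Bool) : presence B X ≤ 1 := by
  unfold presence; split_ifs <;> norm_num

lemma presence_empty : presence (∅ : Finset E) = 1 := by
  ext X; simp [presence]

lemma dependsOn_presence (B : Finset E) : DependsOn (presence B) B := by
  intro X Y h
  have : (∀ e ∈ B, X e = true) ↔ ∀ e ∈ B, Y e = true :=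
    forall₂_congr fun e he => by rw [h e he]
  simp only [presence, this]

variable {ι : Type*} {I : Finset ι} {B : ι → Finset E}

/-- The proportion of the members of the family `B i`, `i ∈ I`, that are present in `X`. -/
def density (I : Finset ι) (B : ι → Finset E) (X : E → Bool) : ℝ := 𝔼 i ∈ I, presence (B i) X

lemma density_mem_Icc (I : Finset ι) (B : ι → Finset E) (X : E → Bool) :
    density I B X ∈ Set.Icc (0 : ℝ) 1 := by
  refine ⟨expect_nonneg fun i _ => presence_nonneg _ _, ?_⟩
  rcases I.eq_empty_or_nonempty with rfl | hI
  · simp [density]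
  · exact expect_le hI fun i _ => presence_le_one _ _

variable [DecidableEq E]

lemma presence_insert (e : E) (B : Finset E) :
    presence (insert e B) = presence B * presence {e} := by
  ext X
  simp only [presence, forall_mem_insert, Pi.mul_apply, mem_singleton, forall_eq, ← ite_and,
    mul_ite, mul_one, mul_zero]

lemma presence_update {B : Finset E} {e : E} (he : e ∉ B) (X : E → Bool) (b : Bool) :
    presence B (Function.update X e b) = presence B X :=
  dependsOn_presence B fun _ hf => Function.update_of_ne (ne_of_mem_of_not_mem hf he) _ _

lemma presence_update_true_sub_update_false (B : Finset E) (e : E) (X : E → Bool) :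
    presence B (Function.update X e true) - presence B (Function.update X e false) =
      if e ∈ B then presence (B.erase e) X else 0 := by
  split_ifs with he
  · nth_rw 1 2 [← insert_erase he]
    rw [presence_insert, Pi.mul_apply, Pi.mul_apply, presence_update (notMem_erase e B),
      presence_update (notMem_erase e B)]
    simp [presence]
  · rw [presence_update he, presence_update he, sub_self]

/-- The configuration `X` with all edges of `B` removed. -/
def removeEdges (B : Finset E) (X : E → Bool) : E → Bool := B.piecewise (fun _ => false) X

lemma dependsOn_comp_removeEdges {β : Type*} (B : Finset E) (h : (E → Bool) → β) :
    DependsOn (fun X => h (removeEdges B X)) (B : Set E)ᶜ := by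
  refine fun X Y hXY => congrArg h (funext fun e => ?_)
  by_cases he : e ∈ B
  · simp [removeEdges, he]
  · simp [removeEdges, he, hXY e he]

lemma presence_removeEdges {A B : Finset E} (hAB : Disjoint A B) (X : E → Bool) :
    presence B (removeEdges A X) = presence B X :=
  dependsOn_presence B fun _ he => piecewise_eq_of_notMem _ _ _ (disjoint_right.mp hAB he)

/-- Every member of the family `B i`, `i ∈ I`, meets at most a proportion `η` of its members. -/
def OverlapLE (I : Finset ι) (B : ι → Finset E) (η : ℝ) : Prop :=
  ∀ i ∈ I, (#{j ∈ I | ¬Disjoint (B i) (B j)} : ℝ) ≤ η * #I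

lemma abs_density_sub_density_removeEdges_le (hI : I.Nonempty) (A : Finset E) {η : ℝ}
    (hη : (#{j ∈ I | ¬Disjoint A (B j)} : ℝ) ≤ η * #I) (X : E → Bool) :
    |density I B X - density I B (removeEdges A X)| ≤ η := by
  have hpoint : ∀ j, |presence (B j) X - presence (B j) (removeEdges A X)| ≤
      if ¬Disjoint A (B j) then 1 else 0 := fun j => by
    split_ifs with hA
    · rw [presence_removeEdges hA, sub_self, abs_zero]
    · exact abs_sub_le_of_nonneg_of_le (presence_nonneg _ _) (presence_le_one _ _)
        (presence_nonneg _ _) (presence_le_one _ _)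
  calc |density I B X - density I B (removeEdges A X)|
      ≤ 𝔼 j ∈ I, |presence (B j) X - presence (B j) (removeEdges A X)| := by
        rw [density, density, ← expect_sub_distrib]; exact abs_expect_le _ _
    _ ≤ 𝔼 j ∈ I, if ¬Disjoint A (B j) then (1 : ℝ) else 0 := expect_le_expect fun j _ => hpoint j
    _ ≤ η := by
        rwa [expect_eq_sum_div_card, sum_boole, div_le_iff₀ (by exact_mod_cast hI.card_pos)]

variable [Fintype E] {μ : (E → Bool) → ℝ} {σ : E → (E → Bool) → ℝ}

/-- `σ e X` is the conditional probability, under the weights `μ`, that `e` is present given the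
status in `X` of all other edges: it integrates as the presence of `e` does against every function
of the other edges. -/
def IsCondProb (μ : (E → Bool) → ℝ) (σ : E → (E → Bool) → ℝ) : Prop :=
  ∀ (e : E) (h : (E → Bool) → ℝ), DependsOn h {e}ᶜ → μ ⬝ᵥ (h * presence {e}) = μ ⬝ᵥ (h * σ e)

lemma sum_eq_zero_of_update_add_update {F : (E → Bool) → ℝ} (e : E)
    (hF : ∀ X, F (Function.update X e true) + F (Function.update X e false) = 0) :
    ∑ X, F X = 0 := by
  set flip : (E → Bool) → E → Bool := fun X => Function.update X e (!X e)
  have hflip : Function.Involutive flip := fun X => by simp [flip]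
  have hcancel : ∀ X, F X + F (flip X) = 0 := fun X => by
    have := hF X
    cases hX : X e
    · rwa [← hX, Function.update_eq_self, add_comm, ← Bool.not_false, ← hX] at this
    · rwa [← hX, Function.update_eq_self, ← Bool.not_true, ← hX] at this
  have hsum := Equiv.sum_comp hflip.toPerm F
  have := sum_congr (rfl : (univ : Finset (E → Bool)) = univ) fun X _ => hcancel X
  rw [sum_add_distrib, sum_const_zero] at this
  simp only [Function.Involutive.coe_toPerm] at hsum
  linarith

lemma isCondProb_of_detailedBalance (hσ : ∀ e, DependsOn (σ e) {e}ᶜ)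
    (hμσ : ∀ e X, μ (Function.update X e true) * (1 - σ e X) =
      μ (Function.update X e false) * σ e X) : IsCondProb μ σ := by
  intro e h hh
  rw [← sub_eq_zero, ← dotProduct_sub, ← mul_sub]
  refine sum_eq_zero_of_update_add_update e fun X => ?_
  have hupd : ∀ b, ∀ f ∈ ({e}ᶜ : Set E), Function.update X e b f = X f :=
    fun b f hf => Function.update_of_ne hf _ _
  simp only [Pi.mul_apply, Pi.sub_apply, hh (hupd _), hσ e (hupd _), presence, mem_singleton,
    forall_eq, Function.update_self, Bool.false_eq_true, if_true, if_false]
  linear_combination h X * hμσ e X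

/- The edges of `B` are resampled one at a time. -/
lemma IsCondProb.mul_dotProduct_mul_presence_le (hσ : IsCondProb μ σ)
    (hμ : μ ∈ stdSimplex ℝ (E → Bool)) {τ q δ : ℝ} (hq : q ∈ Set.Icc (0 : ℝ) 1)
    (hδ : ∀ e, meanExcess μ τ q (σ e) ≤ δ) {h : (E → Bool) → ℝ} (hh₀ : ∀ X, 0 ≤ h X)
    (hh₁ : ∀ X, h X ≤ 1) (B : Finset E) (hB : DependsOn h (B : Set E)ᶜ) :
    τ * (μ ⬝ᵥ (h * presence B)) ≤ τ * q ^ #B * (μ ⬝ᵥ h) + #B * δ := by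
  induction B using Finset.induction_on with
  | empty => simp [presence_empty]
  | insert e B he ih =>
    have hδ₀ : 0 ≤ δ := (meanExcess_nonneg hμ _ _ _).trans (hδ e)
    have hindep : DependsOn (h * presence B) {e}ᶜ := fun X Y hXY => by
      refine congrArg₂ (· * ·) (hB fun f hf => hXY f ?_) (dependsOn_presence B fun f hf => hXY f ?_)
      · exact fun hfe => hf (by simp [Set.mem_singleton_iff.mp hfe])
      · exact ne_of_mem_of_not_mem hf he
    have hIH := ih (hB.mono (by simp))
    calc τ * (μ ⬝ᵥ (h * presence (insert e B)))
        = τ * (μ ⬝ᵥ (h * presence B * σ e)) := by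
          rw [presence_insert, ← mul_assoc, hσ e _ hindep]
      _ ≤ q * (τ * (μ ⬝ᵥ (h * presence B))) + δ :=
          (mul_dotProduct_mul_le_add_meanExcess hμ τ q (σ e)
            (fun X => mul_nonneg (hh₀ X) (presence_nonneg B X))
            (fun X => mul_le_one₀ (hh₁ X) (presence_nonneg B X) (presence_le_one B X))).trans
            (add_le_add_right (hδ e) _)
      _ ≤ q * (τ * q ^ #B * (μ ⬝ᵥ h) + #B * δ) + δ := by gcongr; exact hq.1
      _ ≤ q * (τ * q ^ #B * (μ ⬝ᵥ h)) + #B * δ + δ := by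
          linarith [mul_le_of_le_one_left (a := q) (b := #B * δ) (by positivity) hq.2]
      _ = τ * q ^ #(insert e B) * (μ ⬝ᵥ h) + #(insert e B) * δ := by
          rw [card_insert_of_notMem he]; push_cast; ring

/- Replacing `h` by its value with the edges of `B` removed makes it independent of `B`. -/
lemma IsCondProb.mul_dotProduct_mul_presence_le_of_stable (hσ : IsCondProb μ σ)
    (hμ : μ ∈ stdSimplex ℝ (E → Bool)) {τ q δ η : ℝ} (hτ : |τ| ≤ 1)
    (hq : q ∈ Set.Icc (0 : ℝ) 1) (hδ : ∀ e, meanExcess μ τ q (σ e) ≤ δ) {h : (E → Bool) → ℝ}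
    (hh₀ : ∀ X, 0 ≤ h X) (hh₁ : ∀ X, h X ≤ 1) {B : Finset E}
    (hη : ∀ X, |h X - h (removeEdges B X)| ≤ η) :
    τ * (μ ⬝ᵥ (h * presence B)) ≤ τ * q ^ #B * (μ ⬝ᵥ h) + (2 * η + #B * δ) := by
  set h' : (E → Bool) → ℝ := fun X => h (removeEdges B X)
  have hmain := hσ.mul_dotProduct_mul_presence_le hμ hq hδ (h := h') (fun _ => hh₀ _)
    (fun _ => hh₁ _) B (dependsOn_comp_removeEdges B h)
  have hscale : ∀ {a c : ℝ}, |a| ≤ 1 → |c| ≤ η → a * c ≤ η := fun {a c} ha hc =>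
    (le_abs_self _).trans ((abs_mul a c).trans_le
      ((mul_le_of_le_one_left (abs_nonneg c) ha).trans hc))
  have hleft : τ * (μ ⬝ᵥ (h * presence B) - μ ⬝ᵥ (h' * presence B)) ≤ η := by
    refine hscale hτ (abs_dotProduct_sub_dotProduct_le hμ fun X => ?_)
    rw [Pi.mul_apply, Pi.mul_apply, ← sub_mul, abs_mul, abs_of_nonneg (presence_nonneg B X)]
    exact (mul_le_of_le_one_right (abs_nonneg _) (presence_le_one B X)).trans (hη X)
  have hright : -(τ * q ^ #B) * (μ ⬝ᵥ h - μ ⬝ᵥ h') ≤ η := by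
    refine hscale ?_ (abs_dotProduct_sub_dotProduct_le hμ hη)
    rw [abs_neg, abs_mul, abs_of_nonneg (pow_nonneg hq.1 _)]
    exact mul_le_one₀ hτ (pow_nonneg hq.1 _) (pow_le_one₀ hq.1 hq.2)
  linarith

lemma dotProduct_mul_density (h : (E → Bool) → ℝ) :
    μ ⬝ᵥ (h * density I B) = 𝔼 i ∈ I, μ ⬝ᵥ (h * presence (B i)) := by
  simp only [dotProduct, Pi.mul_apply, density, mul_expect, expect_sum_comm]

lemma IsCondProb.dotProduct_sq_posPart_density_le (hσ : IsCondProb μ σ)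
    (hμ : μ ∈ stdSimplex ℝ (E → Bool)) {τ q δ η : ℝ} (hτ : |τ| ≤ 1)
    (hq : q ∈ Set.Icc (0 : ℝ) 1) (hδ : ∀ e, meanExcess μ τ q (σ e) ≤ δ) (hI : I.Nonempty)
    {k : ℕ} (hk : ∀ i ∈ I, #(B i) = k) (hη : OverlapLE I B η) :
    μ ⬝ᵥ (fun X => (τ * (density I B X - q ^ k))⁺ ^ 2) ≤ 2 * η + k * δ := by
  set D : (E → Bool) → ℝ := fun X => (τ * (density I B X - q ^ k))⁺ with hD
  have hD₁ : ∀ X, D X ≤ 1 := fun X => by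
    refine sup_le ?_ zero_le_one
    have hdiff := abs_sub_le_of_nonneg_of_le (density_mem_Icc I B X).1 (density_mem_Icc I B X).2
      (pow_nonneg hq.1 k) (pow_le_one₀ hq.1 hq.2)
    exact (le_abs_self _).trans ((abs_mul _ _).trans_le (mul_le_one₀ hτ (abs_nonneg _) hdiff))
  have hDstable : ∀ i ∈ I, ∀ X, |D X - D (removeEdges (B i) X)| ≤ η := fun i hi X => by
    refine (abs_max_sub_max_le_abs _ _ _).trans ?_
    rw [← mul_sub, abs_mul, sub_sub_sub_cancel_right]
    exact (mul_le_of_le_one_left (abs_nonneg _) hτ).trans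
      (abs_density_sub_density_removeEdges_le hI (B i) (hη i hi) X)
  have hcopy : ∀ i ∈ I, τ * (μ ⬝ᵥ (D * presence (B i))) ≤
      τ * q ^ k * (μ ⬝ᵥ D) + (2 * η + k * δ) := fun i hi => by
    simpa only [hk i hi] using hσ.mul_dotProduct_mul_presence_le_of_stable hμ hτ hq hδ
      (fun X => posPart_nonneg _) hD₁ (hDstable i hi)
  have hmean : τ * (μ ⬝ᵥ (D * density I B)) ≤ τ * q ^ k * (μ ⬝ᵥ D) + (2 * η + k * δ) := by
    rw [dotProduct_mul_density, mul_expect]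
    exact expect_le hI hcopy
  have hsq : (fun X => D X ^ 2) = τ • (D * density I B) - (τ * q ^ k) • D := by
    ext X
    have : D X ^ 2 = D X * (τ * (density I B X - q ^ k)) := by
      rcases le_total (τ * (density I B X - q ^ k)) 0 with h | h
      · simp [hD, posPart_eq_zero.mpr h]
      · simp only [hD, posPart_eq_self.mpr h, sq]
    simp only [this, Pi.sub_apply, Pi.smul_apply, Pi.mul_apply, smul_eq_mul]
    ring
  rw [hsq, dotProduct_sub, dotProduct_smul, dotProduct_smul, smul_eq_mul, smul_eq_mul]
  linarith

lemma IsCondProb.meanExcess_density_le (hσ : IsCondProb μ σ)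
    (hμ : μ ∈ stdSimplex ℝ (E → Bool)) {τ q δ η : ℝ} (hτ : |τ| ≤ 1)
    (hq : q ∈ Set.Icc (0 : ℝ) 1) (hδ : ∀ e, meanExcess μ τ q (σ e) ≤ δ) (hI : I.Nonempty)
    {k : ℕ} (hk : ∀ i ∈ I, #(B i) = k) (hη : OverlapLE I B η) :
    meanExcess μ τ (q ^ k) (density I B) ≤ √(2 * η + k * δ) :=
  Real.le_sqrt_of_sq_le ((sq_dotProduct_le hμ).trans
    (hσ.dotProduct_sq_posPart_density_le hμ hτ hq hδ hI hk hη))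

end Resampling

section Counting

lemma card_fiber_mul_card {α β : Type*} [Fintype α] [Fintype β] [DecidableEq β] (f : α → β)
    (hf : ∀ b b', ∃ π : Equiv.Perm α, ∀ a, f (π a) = b' ↔ f a = b) (b : β) :
    #{a | f a = b} * Fintype.card β = Fintype.card α := by
  have hconst : ∀ b', #{a | f a = b'} = #{a | f a = b} := fun b' => by
    obtain ⟨π, hπ⟩ := hf b' b
    exact card_equiv π fun a => by simp [hπ]
  have hsum := card_eq_sum_card_fiberwise (s := (univ : Finset α)) (t := (univ : Finset β))
    (f := f) fun _ _ => mem_coe.mpr (mem_univ _)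
  rw [sum_congr rfl fun b' _ => hconst b', sum_const, card_univ, card_univ, smul_eq_mul] at hsum
  rw [hsum, mul_comm]

variable {m n j : ℕ}

lemma exists_perm_trans_eq (w w' : Fin j ↪ Fin n) :
    ∃ π : Equiv.Perm (Fin n), w.trans π.toEmbedding = w' :=
  (MulAction.isMultiplyPretransitive_iff (G := Equiv.Perm (Fin n))).mp
    (Equiv.Perm.isMultiplyPretransitive (Fin n) j) w w'

lemma card_trans_eq_mul_descFactorial (u : Fin j ↪ Fin m) (w : Fin j ↪ Fin n) :
    #{v : Fin m ↪ Fin n | u.trans v = w} * n.descFactorial j = n.descFactorial m := by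
  have h := card_fiber_mul_card (fun v : Fin m ↪ Fin n => u.trans v) (fun w w' => ?_) w
  · simpa [Fintype.card_embedding_eq] using h
  · obtain ⟨π, rfl⟩ := exists_perm_trans_eq w w'
    refine ⟨Equiv.embeddingCongr (Equiv.refl _) π, fun v => ?_⟩
    simp only [DFunLike.ext_iff]
    exact forall_congr' fun k => π.injective.eq_iff

lemma card_subset_range_mul_descFactorial_le (T : Finset (Fin n)) :
    #{v : Fin m ↪ Fin n | (T : Set (Fin n)) ⊆ Set.range v} * n.descFactorial #T ≤
      m.descFactorial #T * n.descFactorial m := by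
  set w : Fin #T ↪ Fin n := (T.orderEmbOfFin rfl).toEmbedding
  have hcover : ({v : Fin m ↪ Fin n | (T : Set (Fin n)) ⊆ Set.range v} : Finset _) ⊆
      (univ : Finset (Fin #T ↪ Fin m)).biUnion fun u => {v | u.trans v = w} := fun v hv => by
    simp only [mem_filter, mem_univ, true_and, mem_biUnion] at hv ⊢
    choose u hu using fun k => hv (T.orderEmbOfFin_mem rfl k)
    exact ⟨⟨u, fun a b hab => w.injective (by
      rw [show w a = _ from (hu a).symm, hab, hu b]; rfl)⟩, DFunLike.ext _ _ hu⟩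
  calc _ ≤ (∑ u : Fin #T ↪ Fin m, #{v : Fin m ↪ Fin n | u.trans v = w}) * n.descFactorial #T :=
        Nat.mul_le_mul_right _ ((card_le_card hcover).trans card_biUnion_le)
    _ = m.descFactorial #T * n.descFactorial m := by
        rw [sum_mul, sum_congr rfl fun u _ => card_trans_eq_mul_descFactorial u w, sum_const,
          card_univ, Fintype.card_embedding_eq, Fintype.card_fin, Fintype.card_fin, smul_eq_mul]

lemma mapEdge_injective (v : Fin m ↪ Fin n) : Function.Injective (mapEdge v) := fun _ _ h =>
  Subtype.ext (Sym2.map.injective v.injective (congrArg Subtype.val h))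

lemma mapEdge_trans {k : ℕ} (v : Fin m ↪ Fin n) (w : Fin n ↪ Fin k) (a : EdgeK m) :
    mapEdge (v.trans w) a = mapEdge w (mapEdge v a) :=
  Subtype.ext (by simp [mapEdge, Sym2.map_map])

lemma card_edgeK (n : ℕ) : Fintype.card (EdgeK n) = n.choose 2 := by
  rw [← Fintype.card_fin n, ← Sym2.card_subtype_not_diag, Fintype.card_fin]

lemma exists_mapEdge_perm_eq (f f' : EdgeK n) :
    ∃ π : Equiv.Perm (Fin n), mapEdge π.toEmbedding f = f' := by
  have hpair : ∀ f : EdgeK n, ∃ w : Fin 2 ↪ Fin n, s(w 0, w 1) = f.1 := by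
    rintro ⟨⟨x, y⟩, hxy⟩
    exact ⟨⟨![x, y], List.nodup_ofFn.mp (by simpa using hxy)⟩, rfl⟩
  obtain ⟨w, hw⟩ := hpair f
  obtain ⟨w', hw'⟩ := hpair f'
  obtain ⟨π, rfl⟩ := exists_perm_trans_eq w w'
  exact ⟨π, Subtype.ext (by simp [mapEdge, ← hw, ← hw'])⟩

lemma card_mapEdge_eq_mul_choose (a : EdgeK m) (f : EdgeK n) :
    #{v : Fin m ↪ Fin n | mapEdge v a = f} * n.choose 2 = n.descFactorial m := by
  have h := card_fiber_mul_card (fun v : Fin m ↪ Fin n => mapEdge v a) (fun f f' => ?_) f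
  · simpa only [card_edgeK, Fintype.card_embedding_eq, Fintype.card_fin] using h
  · obtain ⟨π, rfl⟩ := exists_mapEdge_perm_eq f f'
    refine ⟨Equiv.embeddingCongr (Equiv.refl _) π, fun v => ?_⟩
    exact (mapEdge_trans v π.toEmbedding a).congr_left.trans (mapEdge_injective _).eq_iff

/-- The edges of the copy of the pattern `G` placed in `K_n` by `v`. -/
def copyEdges (G : Finset (EdgeK m)) (v : Fin m ↪ Fin n) : Finset (EdgeK n) := G.image (mapEdge v)

/-- The placements of the pattern `G` in `K_n` that use the edge `f`. -/
def rootedCopies (G : Finset (EdgeK m)) (f : EdgeK n) : Finset (Fin m ↪ Fin n) :=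
  {v | f ∈ copyEdges G v}

/-- The edges other than `f` of the copy of the pattern `G` placed in `K_n` by `v`. -/
def rootedEdges (G : Finset (EdgeK m)) (f : EdgeK n) (v : Fin m ↪ Fin n) : Finset (EdgeK n) :=
  (copyEdges G v).erase f

variable (G : Finset (EdgeK m))

lemma card_copyEdges (v : Fin m ↪ Fin n) : #(copyEdges G v) = #G :=
  card_image_of_injective G (mapEdge_injective v)

lemma mem_rootedCopies {f : EdgeK n} {v : Fin m ↪ Fin n} :
    v ∈ rootedCopies G f ↔ f ∈ copyEdges G v := by
  simp [rootedCopies]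

lemma card_rootedEdges {f : EdgeK n} {v : Fin m ↪ Fin n} (hv : v ∈ rootedCopies G f) :
    #(rootedEdges G f v) = #G - 1 := by
  rw [rootedEdges, card_erase_of_mem ((mem_rootedCopies G).mp hv), card_copyEdges]

lemma copyCount_eq_sum_presence (X : Config n) :
    (copyCount X G : ℝ) = ∑ v : Fin m ↪ Fin n, presence (copyEdges G v) X := by
  simp only [copyCount, presence, copyEdges, forall_mem_image, sum_boole]

lemma copyCount_eq_mul_density (X : Config n) :
    (copyCount X G : ℝ) = n.descFactorial m * density univ (copyEdges G) X := by
  rw [copyCount_eq_sum_presence, density, ← card_mul_expect, card_univ,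
    Fintype.card_embedding_eq, Fintype.card_fin, Fintype.card_fin]

lemma copyCount_update_true_sub_update_false (X : Config n) (f : EdgeK n) :
    (copyCount (Function.update X f true) G : ℝ) - copyCount (Function.update X f false) G =
      #(rootedCopies G f) * density (rootedCopies G f) (rootedEdges G f) X := by
  rw [copyCount_eq_sum_presence, copyCount_eq_sum_presence, ← sum_sub_distrib, density,
    card_mul_expect, rootedCopies, sum_filter]
  exact sum_congr rfl fun v _ => presence_update_true_sub_update_false _ _ _

lemma card_rootedCopies_mul_choose (f : EdgeK n) :
    #(rootedCopies G f) * n.choose 2 = #G * n.descFactorial m := by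
  have hunion : rootedCopies G f = G.biUnion fun a => {v | mapEdge v a = f} := by
    ext v; simp [rootedCopies, copyEdges]
  rw [hunion, card_biUnion fun a _ b _ hab => ?_, sum_mul,
    sum_congr rfl fun a _ => card_mapEdge_eq_mul_choose a f, sum_const, smul_eq_mul]
  exact disjoint_filter.mpr fun v _ ha hb => hab (mapEdge_injective v (ha.trans hb.symm))

lemma overlapLE_copyEdges (hn : 2 ≤ n) :
    OverlapLE (univ : Finset (Fin m ↪ Fin n)) (copyEdges G) (#G ^ 2 / n.choose 2) := by
  intro v _
  have hcover : ({w | ¬Disjoint (copyEdges G v) (copyEdges G w)} : Finset (Fin m ↪ Fin n)) ⊆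
      (copyEdges G v).biUnion (rootedCopies G) := fun w hw => by
    simpa [not_disjoint_iff, mem_rootedCopies] using hw
  have hcard := calc
    #{w | ¬Disjoint (copyEdges G v) (copyEdges G w)} * n.choose 2
      ≤ (∑ f ∈ copyEdges G v, #(rootedCopies G f)) * n.choose 2 :=
        Nat.mul_le_mul_right _ ((card_le_card hcover).trans card_biUnion_le)
    _ = #G ^ 2 * #(univ : Finset (Fin m ↪ Fin n)) := by
        rw [sum_mul, sum_congr rfl fun f _ => card_rootedCopies_mul_choose G f, sum_const,
          card_copyEdges, card_univ, Fintype.card_embedding_eq, Fintype.card_fin,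
          Fintype.card_fin, smul_eq_mul, sq, mul_assoc]
  rw [div_mul_eq_mul_div, le_div_iff₀ (by exact_mod_cast Nat.choose_pos hn)]
  exact_mod_cast hcard

lemma coe_toFinset_mapEdge_subset_range (v : Fin m ↪ Fin n) (a : EdgeK m) :
    ((mapEdge v a).1.toFinset : Set (Fin n)) ⊆ Set.range v := by
  intro x hx
  obtain ⟨i, -, hi⟩ := Sym2.mem_map.mp (Sym2.mem_toFinset.mp hx)
  exact ⟨i, hi⟩

lemma three_le_card_toFinset_union {f g : EdgeK n} (hfg : f ≠ g) :
    3 ≤ #(f.1.toFinset ∪ g.1.toFinset) := by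
  by_contra! hlt
  have hf := Sym2.card_toFinset_of_not_isDiag f.1 f.2
  have hg := Sym2.card_toFinset_of_not_isDiag g.1 g.2
  have hunion : ∀ e : EdgeK n, #e.1.toFinset = 2 → e.1.toFinset ⊆ f.1.toFinset ∪ g.1.toFinset →
      e.1.toFinset = f.1.toFinset ∪ g.1.toFinset :=
    fun e he hsub => eq_of_subset_of_card_le hsub (by omega)
  have hfin := (hunion f hf subset_union_left).trans (hunion g hg subset_union_right).symm
  refine hfg (Subtype.ext (Sym2.ext fun x => ?_))
  rw [← Sym2.mem_toFinset, hfin, Sym2.mem_toFinset]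

lemma card_rootedCopies_inter_mul_descFactorial_le {f g : EdgeK n} (hfg : f ≠ g) :
    #(rootedCopies G f ∩ rootedCopies G g) * n.descFactorial 3 ≤
      m.descFactorial 3 * n.descFactorial m := by
  obtain ⟨T, hTsub, hT⟩ := exists_subset_card_eq (three_le_card_toFinset_union hfg)
  have hrange : ∀ v : Fin m ↪ Fin n, ∀ e ∈ copyEdges G v,
      (e.1.toFinset : Set (Fin n)) ⊆ Set.range v := fun v e he => by
    obtain ⟨a, -, rfl⟩ := mem_image.mp he
    exact coe_toFinset_mapEdge_subset_range v a
  refine le_trans (Nat.mul_le_mul_right _ (card_le_card fun v hv => ?_))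
    (hT ▸ card_subset_range_mul_descFactorial_le T)
  rw [mem_inter, mem_rootedCopies, mem_rootedCopies] at hv
  refine mem_filter.mpr ⟨mem_univ v, (coe_subset.mpr hTsub).trans ?_⟩
  rw [coe_union]
  exact Set.union_subset (hrange v f hv.1) (hrange v g hv.2)

lemma card_rootedCopies_not_disjoint_mul_le {f : EdgeK n} {A : Finset (EdgeK n)} (hf : f ∉ A) :
    #{w ∈ rootedCopies G f | ¬Disjoint A (rootedEdges G f w)} * n.descFactorial 3 ≤
      #A * (m.descFactorial 3 * n.descFactorial m) := by
  have hcover : {w ∈ rootedCopies G f | ¬Disjoint A (rootedEdges G f w)} ⊆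
      A.biUnion fun g => rootedCopies G f ∩ rootedCopies G g := fun w hw => by
    obtain ⟨hwf, hw⟩ := mem_filter.mp hw
    obtain ⟨g, hgA, hg⟩ := not_disjoint_iff.mp hw
    exact mem_biUnion.mpr ⟨g, hgA, mem_inter.mpr
      ⟨hwf, (mem_rootedCopies G).mpr (mem_of_mem_erase hg)⟩⟩
  calc _ ≤ (∑ g ∈ A, #(rootedCopies G f ∩ rootedCopies G g)) * n.descFactorial 3 :=
        Nat.mul_le_mul_right _ ((card_le_card hcover).trans card_biUnion_le)
    _ ≤ ∑ _g ∈ A, m.descFactorial 3 * n.descFactorial m := by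
        rw [sum_mul]
        exact sum_le_sum fun g hg => card_rootedCopies_inter_mul_descFactorial_le G
          (ne_of_mem_of_not_mem hg hf).symm
    _ = _ := by rw [sum_const, smul_eq_mul]

lemma overlapLE_rootedEdges (hn : 3 ≤ n) (f : EdgeK n) :
    OverlapLE (rootedCopies G f) (rootedEdges G f) (m.descFactorial 3 / (2 * (n - 2 : ℕ))) := by
  intro v hv
  set N := #{w ∈ rootedCopies G f | ¬Disjoint (rootedEdges G f v) (rootedEdges G f w)}
  have hchoose : n.descFactorial 3 = 2 * (n - 2) * n.choose 2 := by
    rw [Nat.descFactorial_succ, Nat.descFactorial_eq_factorial_mul_choose, Nat.factorial_two]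
    ring
  have hN : N * (2 * (n - 2)) * n.choose 2 ≤
      m.descFactorial 3 * #(rootedCopies G f) * n.choose 2 := calc
    _ = N * n.descFactorial 3 := by rw [hchoose]; ring
    _ ≤ (#G - 1) * (m.descFactorial 3 * n.descFactorial m) := by
        rw [← card_rootedEdges G hv]
        exact card_rootedCopies_not_disjoint_mul_le G (notMem_erase _ _)
    _ ≤ #G * (m.descFactorial 3 * n.descFactorial m) := Nat.mul_le_mul_right _ (Nat.sub_le _ _)
    _ = _ := by rw [mul_assoc, card_rootedCopies_mul_choose]; ring
  rw [div_mul_eq_mul_div, le_div_iff₀ (by exact_mod_cast (by omega : 0 < 2 * (n - 2)))]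
  exact_mod_cast Nat.le_of_mul_le_mul_right hN (Nat.choose_pos (by omega))

lemma copyCount_singleton (a : EdgeK 2) (X : Config n) :
    copyCount X {a} = 2 * edgeCount X := by
  have hfiber : ∀ f : EdgeK n, #{v : Fin 2 ↪ Fin n | mapEdge v a = f} = 2 := fun f => by
    have hpos : 0 < n.choose 2 := card_edgeK n ▸ Fintype.card_pos_iff.mpr ⟨f⟩
    refine Nat.eq_of_mul_eq_mul_right hpos ?_
    rw [card_mapEdge_eq_mul_choose, Nat.descFactorial_eq_factorial_mul_choose, Nat.factorial_two]
  have hunion : ({v | ∀ e ∈ ({a} : Finset (EdgeK 2)), X (mapEdge v e) = true} :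
      Finset (Fin 2 ↪ Fin n)) =
      (univ.filter fun f => X f = true).biUnion fun f => {v | mapEdge v a = f} := by
    ext v; simp
  rw [copyCount, hunion, card_biUnion fun f _ g _ hfg => ?_, sum_congr rfl fun f _ => hfiber f,
    sum_const, smul_eq_mul, mul_comm, edgeCount]
  exact disjoint_filter.mpr fun v _ hf hg => hfg (hf.symm.trans hg)

end Counting

lemma abs_sigmoid_sub_sigmoid_le (x y : ℝ) : |Real.sigmoid x - Real.sigmoid y| ≤ |x - y| := by
  have hderiv : ∀ z : ℝ, ‖deriv Real.sigmoid z‖ ≤ 1 := fun z => by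
    rw [Real.deriv_sigmoid, Real.norm_eq_abs, abs_le]
    have h₀ := Real.sigmoid_nonneg z
    have h₁ := Real.sigmoid_le_one z
    constructor <;> nlinarith
  simpa using Convex.norm_image_sub_le_of_norm_deriv_le
    (fun z _ => differentiable_sigmoid z) (fun z _ => hderiv z) convex_univ
    (Set.mem_univ y) (Set.mem_univ x)

lemma posPart_mul_sigmoid_sub_sigmoid_le (τ x y : ℝ) :
    (τ * (Real.sigmoid x - Real.sigmoid y))⁺ ≤ (τ * (x - y))⁺ := by
  wlog hxy : y ≤ x generalizing τ x y
  · simpa only [← mul_neg, neg_mul, neg_sub] using this (-τ) y x (le_of_not_ge hxy)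
  have hmono := sub_nonneg.mpr (Real.sigmoid_monotone hxy)
  have hlip := abs_sigmoid_sub_sigmoid_le x y
  rw [abs_of_nonneg hmono, abs_of_nonneg (sub_nonneg.mpr hxy)] at hlip
  rcases le_total 0 τ with hτ | hτ
  · exact posPart_mono (mul_le_mul_of_nonneg_left hlip hτ)
  · rw [posPart_eq_zero.mpr (mul_nonpos_of_nonpos_of_nonneg hτ hmono)]
    exact posPart_nonneg _

section VanishingExcess

variable {Ω κ : ℕ → Type*} [∀ n, Fintype (Ω n)] {μ : ∀ n, Ω n → ℝ} {F : ∀ n, κ n → Ω n → ℝ}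
  {τ q : ℝ}

/-- The mean excess of `F n k` over `q`, in the direction `τ`, tends to `0` as `n → ∞`, uniformly
in `k`. -/
def VanishingExcess (μ : ∀ n, Ω n → ℝ) (τ q : ℝ) (F : ∀ n, κ n → Ω n → ℝ) : Prop :=
  ∀ δ > 0, ∀ᶠ n in atTop, ∀ k, meanExcess (μ n) τ q (F n k) ≤ δ

lemma vanishingExcess_of_le {ε : ℕ → ℝ} (hε : Tendsto ε atTop (𝓝 0))
    (h : ∀ᶠ n in atTop, ∀ k, meanExcess (μ n) τ q (F n k) ≤ ε n) : VanishingExcess μ τ q F :=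
  fun δ hδ => by
    filter_upwards [h, hε.eventually_le_const hδ] with n hn hεn k using (hn k).trans hεn

lemma vanishingExcess_of_nonpos (h : ∀ n k x, τ * (F n k x - q) ≤ 0) : VanishingExcess μ τ q F :=
  vanishingExcess_of_le tendsto_const_nhds (.of_forall fun n k => by
    simp [meanExcess, dotProduct, posPart_eq_zero.mpr (h n k _)])

variable (hμ : ∀ n, μ n ∈ stdSimplex ℝ (Ω n))

include hμ

lemma VanishingExcess.exists_bound [∀ n, Finite (κ n)] (h : VanishingExcess μ τ q F) :
    ∃ ε : ℕ → ℝ, Tendsto ε atTop (𝓝 0) ∧ ∀ n k, meanExcess (μ n) τ q (F n k) ≤ ε n := by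
  refine ⟨fun n => ⨆ k, meanExcess (μ n) τ q (F n k), ?_,
    fun n => le_ciSup (Set.finite_range _).bddAbove⟩
  rw [NormedAddGroup.tendsto_nhds_zero]
  intro δ hδ
  filter_upwards [h (δ / 2) (half_pos hδ)] with n hn
  rw [Real.norm_of_nonneg (Real.iSup_nonneg fun k => meanExcess_nonneg (hμ n) _ _ _)]
  exact (Real.iSup_le hn (half_pos hδ).le).trans_lt (half_lt_self hδ)

lemma vanishingExcess_of_tendsto {a : ℕ → ℝ} (ha : Tendsto a atTop (𝓝 q)) :
    VanishingExcess μ τ q fun n (_ : κ n) _ => a n := by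
  have hlim : Tendsto (fun n => |τ * (a n - q)|) atTop (𝓝 0) := by
    simpa using ((ha.sub_const q).const_mul τ).abs
  refine vanishingExcess_of_le hlim (.of_forall fun n _ => ?_)
  simpa [meanExcess] using
    meanExcess_le_add_meanExcess (hμ n) (q' := 0) (g := 0) fun x => by simp

lemma VanishingExcess.of_tendsto {u : ℕ → ℝ} (hu : Tendsto u atTop (𝓝 q))
    (h : ∀ j, VanishingExcess μ τ (u j) F) : VanishingExcess μ τ q F := by
  intro δ hδ
  have hlim : Tendsto (fun j => |τ * (u j - q)|) atTop (𝓝 0) := by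
    simpa using ((hu.sub_const q).const_mul τ).abs
  obtain ⟨j, hj⟩ := (hlim.eventually_le_const (half_pos hδ)).exists
  filter_upwards [h j (δ / 2) (half_pos hδ)] with n hn k
  have := meanExcess_le_add_meanExcess (hμ n) (τ := τ) (q := q) (q' := u j) (f := F n k)
    (g := F n k) (η := δ / 2) fun x => by rwa [← mul_sub, sub_sub_sub_cancel_left]
  linarith [hn k]

lemma VanishingExcess.sigmoid (h : VanishingExcess μ τ q F) :
    VanishingExcess μ τ (Real.sigmoid q) fun n k x => Real.sigmoid (F n k x) :=
  fun δ hδ => (h δ hδ).mono fun n hn k => (dotProduct_le_dotProduct_of_nonneg_left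
    (fun _ => posPart_mul_sigmoid_sub_sigmoid_le τ _ _) (hμ n).1).trans (hn k)

lemma tendsto_dotProduct_abs_sub {f : ∀ n, Ω n → ℝ}
    (hpos : VanishingExcess μ 1 q fun n (_ : Unit) => f n)
    (hneg : VanishingExcess μ (-1) q fun n (_ : Unit) => f n) :
    Tendsto (fun n => μ n ⬝ᵥ fun x => |f n x - q|) atTop (𝓝 0) := by
  obtain ⟨ε, hε, hpos⟩ := hpos.exists_bound hμ
  obtain ⟨ε', hε', hneg⟩ := hneg.exists_bound hμ
  refine squeeze_zero (fun n => dotProduct_nonneg_of_nonneg (hμ n).1 fun x => abs_nonneg _)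
    (fun n => ?_) (by simpa using hε.add hε')
  rw [← meanExcess_one_add_meanExcess_neg_one]
  exact add_le_add (hpos n ()) (hneg n ())

variable [∀ n, Finite (κ n)]

lemma VanishingExcess.sum {ι : Type*} {s : Finset ι} {q : ι → ℝ} {F : ι → ∀ n, κ n → Ω n → ℝ}
    (h : ∀ i ∈ s, VanishingExcess μ τ (q i) (F i)) :
    VanishingExcess μ τ (∑ i ∈ s, q i) fun n k x => ∑ i ∈ s, F i n k x := by
  choose! ε hε hle using fun i hi => (h i hi).exists_bound hμ
  have hlim : Tendsto (fun n => ∑ i ∈ s, ε i n) atTop (𝓝 0) := by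
    simpa using tendsto_finsetSum s hε
  exact vanishingExcess_of_le hlim (.of_forall fun n k =>
    (meanExcess_sum_le (hμ n) τ s q _).trans (sum_le_sum fun i hi => hle i hi n k))

lemma VanishingExcess.mul_of_tendsto (h : VanishingExcess μ τ q F)
    (hF : ∀ n k x, F n k x ∈ Set.Icc (0 : ℝ) 1) {r : ℕ → ℝ} {r₀ : ℝ} (hr₀ : 0 ≤ r₀)
    (hr : Tendsto r atTop (𝓝 r₀)) :
    VanishingExcess μ τ (r₀ * q) fun n k x => r n * F n k x := by
  obtain ⟨ε, hε, hle⟩ := h.exists_bound hμ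
  have hlim : Tendsto (fun n => |τ * (r n - r₀)| + r₀ * ε n) atTop (𝓝 0) := by
    simpa using ((hr.sub_const r₀).const_mul τ).abs.add (hε.const_mul r₀)
  refine vanishingExcess_of_le hlim (.of_forall fun n k => ?_)
  have hreplace := meanExcess_le_add_meanExcess (hμ n) (τ := τ) (q := r₀ * q) (q' := r₀ * q)
    (f := fun x => r n * F n k x) (g := fun x => r₀ * F n k x) (η := |τ * (r n - r₀)|) fun x => by
      rw [← mul_sub, sub_sub_sub_cancel_right, ← sub_mul, ← mul_assoc, abs_mul,
        abs_of_nonneg (hF n k x).1]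
      exact mul_le_of_le_one_right (abs_nonneg _) (hF n k x).2
  rw [meanExcess_const_mul _ _ _ _ hr₀] at hreplace
  exact hreplace.trans (by gcongr; exact hle n k)

end VanishingExcess

section DensityLimit

variable {E κ : ℕ → Type*} [∀ n, Fintype (E n)] [∀ n, DecidableEq (E n)]
  {μ : ∀ n, (E n → Bool) → ℝ} {σ : ∀ n, E n → (E n → Bool) → ℝ}

lemma vanishingExcess_density (hσ : ∀ n, IsCondProb (μ n) (σ n))
    (hμ : ∀ n, μ n ∈ stdSimplex ℝ (E n → Bool)) {τ q : ℝ} (hτ : |τ| ≤ 1)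
    (hq : q ∈ Set.Icc (0 : ℝ) 1) (h : VanishingExcess μ τ q σ) {ι : ℕ → Type*}
    {I : ∀ n, κ n → Finset (ι n)} {B : ∀ n, κ n → ι n → Finset (E n)} {k : ℕ} {η : ℕ → ℝ}
    (hη : Tendsto η atTop (𝓝 0))
    (hIB : ∀ᶠ n in atTop, ∀ c, (I n c).Nonempty ∧ (∀ i ∈ I n c, #(B n c i) = k) ∧
      OverlapLE (I n c) (B n c) (η n)) :
    VanishingExcess μ τ (q ^ k) fun n c => density (I n c) (B n c) := by
  obtain ⟨ε, hε, hle⟩ := h.exists_bound hμ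
  have hlim : Tendsto (fun n => √(2 * η n + k * ε n)) atTop (𝓝 0) := by
    simpa using ((hη.const_mul 2).add (hε.const_mul (k : ℝ))).sqrt
  refine vanishingExcess_of_le hlim (hIB.mono fun n hn c => ?_)
  obtain ⟨hne, hcard, hoverlap⟩ := hn c
  exact (hσ n).meanExcess_density_le (hμ n) hτ hq (hle n) hne hcard hoverlap

end DensityLimit

section RootedDensity

variable {m : ℕ} (G : Finset (EdgeK m))

/-- The normalised number of placements of the pattern `G` in `K_n` that use a given edge. -/
def rootedRatio (n : ℕ) : ℝ := #G * n.descFactorial m / n.choose 2 / (n : ℝ) ^ (m - 2)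

lemma card_rootedCopies_div_pow {n : ℕ} (f : EdgeK n) :
    (#(rootedCopies G f) : ℝ) / (n : ℝ) ^ (m - 2) = rootedRatio G n := by
  have hpos : 0 < n.choose 2 := card_edgeK n ▸ Fintype.card_pos_iff.mpr ⟨f⟩
  rw [rootedRatio, ← Nat.cast_mul, ← card_rootedCopies_mul_choose G f, Nat.cast_mul,
    mul_div_cancel_right₀ _ (by exact_mod_cast hpos.ne')]

lemma two_le_of_nonempty {G : Finset (EdgeK m)} (hG : G.Nonempty) : 2 ≤ m := by
  obtain ⟨a, -⟩ := hG
  have : 0 < m.choose 2 := card_edgeK m ▸ Fintype.card_pos_iff.mpr ⟨a⟩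
  by_contra! hm
  simp [Nat.choose_eq_zero_of_lt hm] at this

lemma tendsto_rootedRatio : Tendsto (rootedRatio G) atTop (𝓝 (2 * #G)) := by
  rcases G.eq_empty_or_nonempty with rfl | hG
  · exact tendsto_const_nhds.congr fun n => by simp [rootedRatio]
  have hpow : Asymptotics.IsEquivalent atTop
      (fun n : ℕ => #G * (n : ℝ) ^ m / ((n : ℝ) ^ 2 / (Nat.factorial 2 : ℝ)) / (n : ℝ) ^ (m - 2))
      (rootedRatio G) :=
    ((Asymptotics.IsEquivalent.refl.mul (isEquivalent_descFactorial m).symm).div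
      (isEquivalent_choose 2).symm).div Asymptotics.IsEquivalent.refl
  refine hpow.tendsto_nhds (tendsto_const_nhds.congr' ?_)
  filter_upwards [eventually_gt_atTop 0] with n hn
  have hn' : (n : ℝ) ≠ 0 := by positivity
  rw [← pow_mul_pow_sub (n : ℝ) (two_le_of_nonempty hG), Nat.factorial_two]
  field_simp
  norm_num

lemma rootedRatio_mul_density_of_card_le_one (hG : #G ≤ 1) {n : ℕ} (f : EdgeK n) (X : Config n) :
    rootedRatio G n * density (rootedCopies G f) (rootedEdges G f) X = rootedRatio G n := by
  have hone : ∀ v ∈ rootedCopies G f, presence (rootedEdges G f v) X = 1 := fun v hv => by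
    have hempty : rootedEdges G f v = ∅ := card_eq_zero.mp (by rw [card_rootedEdges G hv]; omega)
    rw [hempty, presence_empty, Pi.one_apply]
  rw [← card_rootedCopies_div_pow G f, div_mul_eq_mul_div, density, card_mul_expect,
    sum_congr rfl hone, sum_const, nsmul_one]

variable {μ : ∀ n, Config n → ℝ} {σ : ∀ n, EdgeK n → Config n → ℝ} {τ q : ℝ}

lemma vanishingExcess_density_rootedEdges (hσ : ∀ n, IsCondProb (μ n) (σ n))
    (hμ : ∀ n, μ n ∈ stdSimplex ℝ (Config n)) (hτ : |τ| ≤ 1) (hq : q ∈ Set.Icc (0 : ℝ) 1)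
    (h : VanishingExcess μ τ q σ) (hG : G.Nonempty) :
    VanishingExcess μ τ (q ^ (#G - 1)) fun n (f : EdgeK n) =>
      density (rootedCopies G f) (rootedEdges G f) := by
  have hη : Tendsto (fun n : ℕ => (m.descFactorial 3 : ℝ) / (2 * (n - 2 : ℕ))) atTop (𝓝 0) :=
    ((tendsto_natCast_atTop_atTop.comp (tendsto_sub_atTop_nat 2)).const_mul_atTop
      zero_lt_two).const_div_atTop _
  refine vanishingExcess_density hσ hμ hτ hq h hη ?_
  filter_upwards [eventually_ge_atTop 3, eventually_ge_atTop m] with n hn hmn f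
  refine ⟨?_, fun v hv => card_rootedEdges G hv, overlapLE_rootedEdges G hn f⟩
  have hpos : 0 < #G * n.descFactorial m :=
    Nat.mul_pos hG.card_pos (Nat.descFactorial_pos.mpr hmn)
  rw [← card_rootedCopies_mul_choose G f] at hpos
  exact card_pos.mp (pos_of_mul_pos_left hpos (Nat.zero_le _))

lemma vanishingExcess_rootedRatio_mul_density (hσ : ∀ n, IsCondProb (μ n) (σ n))
    (hμ : ∀ n, μ n ∈ stdSimplex ℝ (Config n)) (hτ : |τ| ≤ 1) (hq : q ∈ Set.Icc (0 : ℝ) 1)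
    (h : VanishingExcess μ τ q σ) {b : ℝ} (hb : 2 ≤ #G → 0 ≤ b) :
    VanishingExcess μ τ (2 * b * #G * q ^ (#G - 1)) fun n (f : EdgeK n) X =>
      b * rootedRatio G n * density (rootedCopies G f) (rootedEdges G f) X := by
  have hlim : Tendsto (fun n => b * rootedRatio G n) atTop (𝓝 (2 * b * #G)) := by
    convert (tendsto_rootedRatio G).const_mul b using 2
    ring
  rcases le_or_gt #G 1 with hG | hG
  · simp only [mul_assoc b, rootedRatio_mul_density_of_card_le_one G hG, Nat.sub_eq_zero_of_le hG,
      pow_zero, mul_one]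
    exact vanishingExcess_of_tendsto hμ hlim
  · have hdensity := vanishingExcess_density_rootedEdges G hσ hμ hτ hq h (card_pos.mp (by omega))
    have hb₀ := hb hG
    exact hdensity.mul_of_tendsto hμ (fun n f X => density_mem_Icc _ _ X) (by positivity) hlim

end RootedDensity

section Gibbs

variable {s : ℕ} (V : Fin s → ℕ) (Pt : ∀ i, Finset (EdgeK (V i))) (β : Fin s → ℝ)

lemma gibbs_mem_stdSimplex (n : ℕ) : gibbs V Pt β n ∈ stdSimplex ℝ (Config n) := by
  have hpos : 0 < ∑ Y, Real.exp (ergmH V Pt β n Y) :=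
    sum_pos (fun _ _ => Real.exp_pos _) univ_nonempty
  refine ⟨fun X => div_nonneg (Real.exp_pos _).le hpos.le, ?_⟩
  simp only [gibbs, ← sum_div]
  exact div_self hpos.ne'

lemma setEdge_eq_update {n : ℕ} (X : Config n) (e : EdgeK n) (b : Bool) :
    setEdge X e b = Function.update X e b := by
  ext f
  simp [setEdge, Function.update_apply]

/-- The conditional probability, under the Gibbs measure, that the edge `e` is present given the
rest of the graph. -/
def edgeProb (n : ℕ) (e : EdgeK n) (X : Config n) : ℝ := Real.sigmoid (dH V Pt β n X e)

lemma isCondProb_edgeProb (n : ℕ) : IsCondProb (gibbs V Pt β n) (edgeProb V Pt β n) := by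
  refine isCondProb_of_detailedBalance (fun e X Y hXY => ?_) fun e X => ?_
  · have hset : ∀ b, setEdge X e b = setEdge Y e b := fun b => funext fun f => by
      by_cases hf : f = e
      · simp [setEdge, hf]
      · simp [setEdge, hf, hXY f hf]
    simp only [edgeProb, dH, hset]
  · have hexp : Real.exp (ergmH V Pt β n (setEdge X e true)) =
        Real.exp (ergmH V Pt β n (setEdge X e false)) * Real.exp (dH V Pt β n X e) := by
      rw [← Real.exp_add, dH, add_sub_cancel]
    rw [← setEdge_eq_update, ← setEdge_eq_update, gibbs, gibbs, hexp, edgeProb,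
      ← Real.sigmoid_neg, Real.sigmoid_def, Real.sigmoid_def, neg_neg, Real.exp_neg]
    field_simp
    ring

lemma dH_eq_sum_rootedRatio_mul_density (n : ℕ) (X : Config n) (f : EdgeK n) :
    dH V Pt β n X f = ∑ i, β i * rootedRatio (Pt i) n *
      density (rootedCopies (Pt i) f) (rootedEdges (Pt i) f) X := by
  simp only [dH, ergmH, ← sum_sub_distrib, setEdge_eq_update]
  refine sum_congr rfl fun i _ => ?_
  rw [← sub_div, ← mul_sub, copyCount_update_true_sub_update_false,
    ← card_rootedCopies_div_pow (Pt i) f]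
  ring

lemma phiF_eq_sigmoid (p : ℝ) : phiF Pt β p = Real.sigmoid (PsiF Pt β p) := by
  rw [phiF, Real.sigmoid_def, Real.exp_neg]
  field_simp
  ring

variable {V Pt β}

lemma VanishingExcess.edgeProb_phiF (hβ : ∀ i, 2 ≤ #(Pt i) → 0 ≤ β i) {τ q : ℝ} (hτ : |τ| ≤ 1)
    (hq : q ∈ Set.Icc (0 : ℝ) 1)
    (h : VanishingExcess (gibbs V Pt β) τ q (edgeProb V Pt β)) :
    VanishingExcess (gibbs V Pt β) τ (phiF Pt β q) (edgeProb V Pt β) := by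
  have hμ := gibbs_mem_stdSimplex V Pt β
  have hsum := VanishingExcess.sum hμ (s := univ) fun i _ =>
    vanishingExcess_rootedRatio_mul_density (Pt i) (isCondProb_edgeProb V Pt β) hμ hτ hq h (hβ i)
  simp only [← dH_eq_sum_rootedRatio_mul_density] at hsum
  rw [phiF_eq_sigmoid]
  exact hsum.sigmoid hμ

end Gibbs

section FixedPoint

lemma tendsto_iterate_left_of_unique_fixedPoint {α : Type*} [ConditionallyCompleteLinearOrder α]
    [TopologicalSpace α] [OrderTopology α] {f : α → α} {a b p : α} (hab : a ≤ b)
    (hcont : Continuous f) (hmaps : Set.MapsTo f (Set.Icc a b) (Set.Icc a b))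
    (hmono : MonotoneOn f (Set.Icc a b)) (huniq : ∀ x ∈ Set.Icc a b, f x = x → x = p) :
    Tendsto (fun k => f^[k] a) atTop (𝓝 p) := by
  have hmem : ∀ k, f^[k] a ∈ Set.Icc a b := fun k => hmaps.iterate k (Set.left_mem_Icc.mpr hab)
  have hstep : ∀ k, f^[k] a ≤ f^[k + 1] a := fun k => by
    induction k with
    | zero => exact (hmem 1).1
    | succ k ih =>
      simpa only [Function.iterate_succ_apply'] using hmono (hmem k) (hmem (k + 1)) ih
  have hlim := tendsto_atTop_ciSup (monotone_nat_of_le_succ hstep)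
    ⟨b, Set.forall_mem_range.mpr fun k => (hmem k).2⟩
  have hlim_mem := isClosed_Icc.mem_of_tendsto hlim (.of_forall hmem)
  rwa [huniq _ hlim_mem (isFixedPt_of_tendsto_iterate hlim hcont.continuousAt)] at hlim

lemma tendsto_iterate_right_of_unique_fixedPoint {α : Type*} [ConditionallyCompleteLinearOrder α]
    [TopologicalSpace α] [OrderTopology α] {f : α → α} {a b p : α} (hab : a ≤ b)
    (hcont : Continuous f) (hmaps : Set.MapsTo f (Set.Icc a b) (Set.Icc a b))
    (hmono : MonotoneOn f (Set.Icc a b)) (huniq : ∀ x ∈ Set.Icc a b, f x = x → x = p) :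
    Tendsto (fun k => f^[k] b) atTop (𝓝 p) :=
  tendsto_iterate_left_of_unique_fixedPoint (α := αᵒᵈ) (a := b) (b := a) hab hcont
    (fun _ hx => (hmaps hx.symm).symm) (fun _ hx _ hy hxy => hmono hy.symm hx.symm hxy)
    fun x hx => huniq x hx.symm

variable {s : ℕ} {V : Fin s → ℕ} {Pt : ∀ i, Finset (EdgeK (V i))} {β : Fin s → ℝ}

lemma phiF_mem_Icc (p : ℝ) : phiF Pt β p ∈ Set.Icc (0 : ℝ) 1 := by
  rw [phiF_eq_sigmoid]
  exact ⟨Real.sigmoid_nonneg _, Real.sigmoid_le_one _⟩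

lemma continuous_phiF : Continuous (phiF Pt β) := by
  have hPsi : Continuous (PsiF Pt β) := by unfold PsiF; fun_prop
  exact (continuous_sigmoid.comp hPsi).congr fun p => (phiF_eq_sigmoid V Pt β p).symm

lemma monotoneOn_phiF (hβ : ∀ i, 2 ≤ #(Pt i) → 0 ≤ β i) :
    MonotoneOn (phiF Pt β) (Set.Icc 0 1) := by
  intro p hp q _ hpq
  rw [phiF_eq_sigmoid, phiF_eq_sigmoid]
  refine Real.sigmoid_monotone (sum_le_sum fun i _ => ?_)
  rcases le_or_gt #(Pt i) 1 with hi | hi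
  · simp [Nat.sub_eq_zero_of_le hi]
  · have hβi := hβ i hi
    have hp₀ := hp.1
    gcongr

lemma VanishingExcess.edgeProb_of_tendsto_iterate (hβ : ∀ i, 2 ≤ #(Pt i) → 0 ≤ β i) {τ q p : ℝ}
    (hτ : |τ| ≤ 1) (hq : q ∈ Set.Icc (0 : ℝ) 1)
    (h : VanishingExcess (gibbs V Pt β) τ q (edgeProb V Pt β))
    (hp : Tendsto (fun k => (phiF Pt β)^[k] q) atTop (𝓝 p)) :
    VanishingExcess (gibbs V Pt β) τ p (edgeProb V Pt β) := by
  refine VanishingExcess.of_tendsto (gibbs_mem_stdSimplex V Pt β) hp fun k => ?_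
  induction k with
  | zero => exact h
  | succ k ih =>
    rw [Function.iterate_succ_apply']
    have hmaps : Set.MapsTo (phiF Pt β) (Set.Icc 0 1) (Set.Icc 0 1) := fun p _ => phiF_mem_Icc p
    exact ih.edgeProb_phiF hβ hτ (hmaps.iterate k hq)

variable {p : ℝ}

lemma vanishingExcess_one_edgeProb (hβ : ∀ i, 2 ≤ #(Pt i) → 0 ≤ β i)
    (huniq : ∀ q ∈ Set.Icc (0 : ℝ) 1, phiF Pt β q = q → q = p) :
    VanishingExcess (gibbs V Pt β) 1 p (edgeProb V Pt β) := by
  have hone : VanishingExcess (gibbs V Pt β) 1 1 (edgeProb V Pt β) :=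
    vanishingExcess_of_nonpos fun n e X => by
      rw [one_mul]; exact sub_nonpos.mpr (Real.sigmoid_le_one _)
  exact hone.edgeProb_of_tendsto_iterate hβ (by simp) (by simp)
    (tendsto_iterate_right_of_unique_fixedPoint zero_le_one continuous_phiF
      (fun p _ => phiF_mem_Icc p) (monotoneOn_phiF hβ) huniq)

lemma vanishingExcess_neg_one_edgeProb (hβ : ∀ i, 2 ≤ #(Pt i) → 0 ≤ β i)
    (huniq : ∀ q ∈ Set.Icc (0 : ℝ) 1, phiF Pt β q = q → q = p) :
    VanishingExcess (gibbs V Pt β) (-1) p (edgeProb V Pt β) := by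
  have hzero : VanishingExcess (gibbs V Pt β) (-1) 0 (edgeProb V Pt β) :=
    vanishingExcess_of_nonpos fun n e X => by
      rw [sub_zero, neg_one_mul]; exact neg_nonpos.mpr (Real.sigmoid_nonneg _)
  exact hzero.edgeProb_of_tendsto_iterate hβ (by simp) (by simp)
    (tendsto_iterate_left_of_unique_fixedPoint zero_le_one continuous_phiF
      (fun p _ => phiF_mem_Icc p) (monotoneOn_phiF hβ) huniq)

end FixedPoint

section WithHighProb

variable {Ω : ℕ → Type*} [∀ n, Fintype (Ω n)] {μ : ∀ n, Ω n → ℝ} {P Q : ∀ n, Ω n → Prop}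

/-- The event `P n` has probability tending to `1` under the weights `μ n` as `n → ∞`. -/
def WithHighProb (μ : ∀ n, Ω n → ℝ) (P : ∀ n, Ω n → Prop) : Prop :=
  Tendsto (fun n => ∑ x with P n x, μ n x) atTop (𝓝 1)

lemma WithHighProb.tendsto_sum [∀ n, DecidablePred (P n)] (h : WithHighProb μ P) :
    Tendsto (fun n => ∑ x with P n x, μ n x) atTop (𝓝 1) := by
  -- Only the decidability instances of the two filters differ.
  unfold WithHighProb at h
  convert h

variable (hμ : ∀ n, μ n ∈ stdSimplex ℝ (Ω n))

include hμ

lemma withHighProb_iff_tendsto_not :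
    WithHighProb μ P ↔ Tendsto (fun n => ∑ x with ¬P n x, μ n x) atTop (𝓝 0) := by
  have hcompl : ∀ n, ∑ x with P n x, μ n x = 1 - ∑ x with ¬P n x, μ n x := fun n => by
    rw [eq_sub_iff_add_eq, sum_filter_add_sum_filter_not, (hμ n).2]
  simp only [WithHighProb, hcompl]
  exact ⟨fun h => by simpa using h.const_sub 1, fun h => by simpa using h.const_sub 1⟩

lemma WithHighProb.mono (hP : WithHighProb μ P) (hPQ : ∀ᶠ n in atTop, ∀ x, P n x → Q n x) :
    WithHighProb μ Q := by
  refine tendsto_of_tendsto_of_tendsto_of_le_of_le' hP tendsto_const_nhds ?_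
    (.of_forall fun n => ?_)
  · filter_upwards [hPQ] with n hn
    exact sum_le_sum_of_subset_of_nonneg (monotone_filter_right _ fun x _ => hn x)
      fun x _ _ => (hμ n).1 x
  · rw [← (hμ n).2]
    exact sum_le_sum_of_subset_of_nonneg (filter_subset _ _) fun x _ _ => (hμ n).1 x

lemma WithHighProb.and (hP : WithHighProb μ P) (hQ : WithHighProb μ Q) :
    WithHighProb μ fun n x => P n x ∧ Q n x := by
  rw [withHighProb_iff_tendsto_not hμ] at hP hQ ⊢
  refine squeeze_zero (fun n => sum_nonneg fun x _ => (hμ n).1 x) (fun n => ?_)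
    (by simpa using hP.add hQ)
  simp only [not_and_or, filter_or]
  rw [← sum_union_inter]
  exact le_add_of_nonneg_right (sum_nonneg fun x _ => (hμ n).1 x)

lemma withHighProb_le_of_tendsto_dotProduct {f : ∀ n, Ω n → ℝ} (hf : ∀ n x, 0 ≤ f n x)
    (hlim : Tendsto (fun n => μ n ⬝ᵥ f n) atTop (𝓝 0)) {ε : ℝ} (hε : 0 < ε) :
    WithHighProb μ fun n x => f n x ≤ ε := by
  rw [withHighProb_iff_tendsto_not hμ]
  simp only [not_le]
  refine squeeze_zero (fun n => sum_nonneg fun x _ => (hμ n).1 x) (fun n => ?_)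
    (by simpa using hlim.const_mul ε⁻¹)
  rw [← div_eq_inv_mul, le_div_iff₀' hε]
  exact mul_sum_filter_lt_le (hμ n) (hf n) ε

end WithHighProb

section CopyCounts

variable {s : ℕ} {V : Fin s → ℕ} {Pt : ∀ i, Finset (EdgeK (V i))} {β : Fin s → ℝ} {p : ℝ} {m : ℕ}
  (G : Finset (EdgeK m))

lemma VanishingExcess.density_copyEdges {τ : ℝ} (hτ : |τ| ≤ 1) (hp : p ∈ Set.Icc (0 : ℝ) 1)
    (h : VanishingExcess (gibbs V Pt β) τ p (edgeProb V Pt β)) :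
    VanishingExcess (gibbs V Pt β) τ (p ^ #G) fun n (_ : Unit) =>
      density univ (copyEdges (n := n) G) := by
  have hchoose : ∀ᶠ n : ℕ in atTop, n - 1 ≤ n.choose 2 := by
    filter_upwards [eventually_ge_atTop 2] with n hn
    rw [Nat.choose_two_right, Nat.le_div_iff_mul_le two_pos, mul_comm]
    exact Nat.mul_le_mul_right _ hn
  have hη : Tendsto (fun n : ℕ => (#G ^ 2 : ℝ) / n.choose 2) atTop (𝓝 0) :=
    (tendsto_natCast_atTop_atTop.comp
      (tendsto_atTop_mono' _ hchoose (tendsto_sub_atTop_nat 1))).const_div_atTop _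
  refine vanishingExcess_density (isCondProb_edgeProb V Pt β) (gibbs_mem_stdSimplex V Pt β) hτ hp h
    hη ?_
  filter_upwards [eventually_ge_atTop 2, eventually_ge_atTop m] with n hn hmn _
  exact ⟨univ_nonempty_iff.mpr ⟨Fin.castLEEmb hmn⟩, fun v _ => card_copyEdges G v,
    overlapLE_copyEdges G hn⟩

lemma tendsto_descFactorial_div_pow (m : ℕ) :
    Tendsto (fun n : ℕ => (n.descFactorial m : ℝ) / (n : ℝ) ^ m) atTop (𝓝 1) := by
  refine (Asymptotics.isEquivalent_iff_tendsto_one ?_).mp (isEquivalent_descFactorial m)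
  filter_upwards [eventually_gt_atTop 0] with n hn
  positivity

lemma withHighProb_abs_copyCount_sub_le (hβ : ∀ i, 2 ≤ #(Pt i) → 0 ≤ β i)
    (hp : p ∈ Set.Icc (0 : ℝ) 1) (huniq : ∀ q ∈ Set.Icc (0 : ℝ) 1, phiF Pt β q = q → q = p)
    {ε : ℝ} (hε : 0 < ε) :
    WithHighProb (gibbs V Pt β) fun n X =>
      |(copyCount X G : ℝ) - p ^ #G * (n : ℝ) ^ m| ≤ ε * (n : ℝ) ^ m := by
  have hμ := gibbs_mem_stdSimplex V Pt β
  have hmean := tendsto_dotProduct_abs_sub hμ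
    ((vanishingExcess_one_edgeProb hβ huniq).density_copyEdges G (by simp) hp)
    ((vanishingExcess_neg_one_edgeProb hβ huniq).density_copyEdges G (by simp) hp)
  have hdensity := withHighProb_le_of_tendsto_dotProduct hμ (fun n X => abs_nonneg _) hmean
    (half_pos hε)
  refine hdensity.mono hμ ?_
  have hratio : Tendsto (fun n : ℕ => |(n.descFactorial m : ℝ) / (n : ℝ) ^ m - 1|) atTop (𝓝 0) := by
    simpa using ((tendsto_descFactorial_div_pow m).sub_const 1).abs
  filter_upwards [hratio.eventually_le_const (half_pos hε), eventually_gt_atTop 0] with n hr hn X hX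
  set r := (n.descFactorial m : ℝ) / (n : ℝ) ^ m with hr_def
  set D := density univ (copyEdges G) X with hD_def
  have hcount : (copyCount X G : ℝ) = r * D * (n : ℝ) ^ m := by
    rw [copyCount_eq_mul_density, hr_def, hD_def]
    field_simp
  have hD : D ∈ Set.Icc (0 : ℝ) 1 := density_mem_Icc univ (copyEdges G) X
  have hle : |r * D - p ^ #G| ≤ ε := calc
    _ = |(r - 1) * D + (D - p ^ #G)| := by ring_nf
    _ ≤ |(r - 1) * D| + |D - p ^ #G| := abs_add_le _ _
    _ = |r - 1| * D + |D - p ^ #G| := by rw [abs_mul, abs_of_nonneg hD.1]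
    _ ≤ ε / 2 + ε / 2 :=
      add_le_add ((mul_le_of_le_one_right (abs_nonneg _) hD.2).trans hr) hX
    _ = ε := add_halves ε
  rw [hcount, ← sub_mul, abs_mul, abs_of_nonneg (by positivity : (0 : ℝ) ≤ (n : ℝ) ^ m)]
  gcongr

lemma withHighProb_abs_edgeCount_sub_le (hβ : ∀ i, 2 ≤ #(Pt i) → 0 ≤ β i)
    (hp : p ∈ Set.Icc (0 : ℝ) 1) (huniq : ∀ q ∈ Set.Icc (0 : ℝ) 1, phiF Pt β q = q → q = p)
    {ε : ℝ} (hε : 0 < ε) :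
    WithHighProb (gibbs V Pt β) fun n X =>
      |(edgeCount X : ℝ) - p * (n : ℝ) ^ 2 / 2| ≤ ε * (n : ℝ) ^ 2 := by
  have h := withHighProb_abs_copyCount_sub_le {(⟨s(0, 1), by simp⟩ : EdgeK 2)} hβ hp huniq
    (mul_pos two_pos hε)
  refine h.mono (gibbs_mem_stdSimplex V Pt β) (.of_forall fun n X hX => ?_)
  rw [copyCount_singleton, card_singleton, pow_one, abs_le] at hX
  push_cast at hX
  exact abs_le.mpr ⟨by linarith, by linarith⟩

lemma cyclePattern_card (l : ℕ) [NeZero l] (hl : 3 ≤ l) : #(cyclePattern l) = l := by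
  have hone : (1 : Fin l) ≠ 0 := by simp [Fin.ext_iff, Nat.mod_eq_of_lt (by omega : 1 < l)]
  have htwo : (1 + 1 : Fin l) ≠ 0 := by
    simp [Fin.ext_iff, Fin.val_add, Nat.mod_eq_of_lt (by omega : 2 < l)]
  have hdiag : ∀ i : Fin l, ¬(s(i, i + 1) : Sym2 (Fin l)).IsDiag := fun i => by simpa using hone
  have himage : cyclePattern l =
      univ.image fun i : Fin l => (⟨s(i, i + 1), hdiag i⟩ : EdgeK l) := by
    ext a
    simp [cyclePattern, Subtype.ext_iff, eq_comm]
  rw [himage, card_image_of_injective, card_univ, Fintype.card_fin]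
  intro i j hij
  rcases Sym2.eq_iff.mp (congrArg Subtype.val hij) with h | ⟨rfl, h⟩
  · exact h.1
  · exact absurd (by simpa [add_assoc] using h) htwo

end CopyCounts

theorem weak_pseudo_randomness_general {s : ℕ} (V : Fin s → ℕ) (Pt : ∀ i, Finset (EdgeK (V i)))
    (β : Fin s → ℝ) (hβ : ∀ i, 2 ≤ #(Pt i) → 0 ≤ β i) {p : ℝ} (hp : p ∈ Set.Icc (0 : ℝ) 1)
    (huniq : ∀ q ∈ Set.Icc (0 : ℝ) 1, phiF Pt β q = q → q = p) {m : ℕ} (G : Finset (EdgeK m))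
    {ε : ℝ} (hε : 0 < ε) :
    WithHighProb (gibbs V Pt β) fun n X =>
      |(edgeCount X : ℝ) - p * (n : ℝ) ^ 2 / 2| ≤ ε * (n : ℝ) ^ 2 ∧
      |(copyCount X G : ℝ) - p ^ #G * (n : ℝ) ^ m| ≤ ε * (n : ℝ) ^ m :=
  (withHighProb_abs_edgeCount_sub_le hβ hp huniq hε).and (gibbs_mem_stdSimplex V Pt β)
    (withHighProb_abs_copyCount_sub_le G hβ hp huniq hε)

end

/-- **Weak pseudo-randomness.** In the high temperature phase with unique fixed point `p*`,
with probability tending to one a sample from the Gibbs measure has `p* n²/2 + O(εn²)` edges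
and at most `(n p*)^l + ε n^l` labelled copies of the cycle `C_l` (for fixed even `l ≥ 4`). -/
theorem weak_pseudo_randomness
    {L s : ℕ} (hL : 2 ≤ L) (hs : 0 < s)
    (V : Fin s → ℕ) (Pt : ∀ i, Finset (EdgeK (V i))) (β : Fin s → ℝ)
    (hV2 : ∀ i, 2 ≤ V i) (hVL : ∀ i, V i ≤ L)
    (hG1V : V ⟨0, hs⟩ = 2) (hG1E : (Pt ⟨0, hs⟩).card = 1)
    (hβ : ∀ i : Fin s, 0 < (i : ℕ) → 0 < β i)
    (pstar : ℝ) (hHT : HighTemp Pt β pstar)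
    (ε : ℝ) (hε : 0 < ε) (l : ℕ) (hl : 4 ≤ l) (hleven : Even l) :
    Filter.Tendsto (fun n : ℕ =>
        ∑ X ∈ univ.filter (fun X : Config n =>
            |(edgeCount X : ℝ) - pstar * (n : ℝ) ^ 2 / 2| ≤ ε * (n : ℝ) ^ 2 ∧
            (copyCount X (@cyclePattern l ⟨by omega⟩) : ℝ) ≤
              ((n : ℝ) * pstar) ^ l + ε * (n : ℝ) ^ l),
          gibbs V Pt β n X)
      Filter.atTop (nhds 1) := by
  have hβ₀ : ∀ i, 2 ≤ #(Pt i) → 0 ≤ β i := fun i hi => by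
    rcases Nat.eq_zero_or_pos i with h₀ | hpos
    · obtain rfl : i = ⟨0, hs⟩ := Fin.ext h₀
      omega
    · exact (hβ i hpos).le
  have hwhp := weak_pseudo_randomness_general V Pt β hβ₀ hHT.1 hHT.2.2.1
    (@cyclePattern l ⟨by omega⟩) hε
  refine WithHighProb.tendsto_sum
    (hwhp.mono (gibbs_mem_stdSimplex V Pt β) (.of_forall fun n X hX => ⟨hX.1, ?_⟩))
  have hcycles := le_of_abs_le hX.2
  rw [@cyclePattern_card l ⟨by omega⟩ (by omega)] at hcycles
  rw [mul_pow]
  linarith
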